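/- The integration by parts formula holds: for all f, g ∈ C^2(Δ^(N)), −∫ f L_α^(N) g dμ_α^(N) = ∫ (1−|x|_1) Σ_{n=1}^N x_n (∂_n f)(∂_n g) dμ_α^(N). -/

import Mathlib

/-!
With `s = 1 - |x|₁` and `w = s ^ (α_{N+1} - 1) ∏ xᵢ ^ (αᵢ - 1)`, inside the simplex
`∂_n (w x_n s h) = w (h (α_n s - α_{N+1} x_n) + x_n s ∂_n h)`. Taking `h = f ∂_n g` and summing
over `n`, the right-hand side becomes `w (f L g + s ∑ x_n ∂_n f ∂_n g)`, so the formula says that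
a divergence has integral zero.

That is `integral_wdiv`, proved by Fubini: on a segment of the simplex parallel to `e_n` the
integrand is a constant times the derivative of `t ^ α_n (r - t) ^ α_{N+1} h`, which is continuous
and vanishes at both endpoints `0` and `r` because the exponents are positive (`integral_slice`).

Fubini and the splitting of the integrals require `w` to be integrable on the simplex; continuous
functions on the compact simplex are then integrable against it. Finiteness of `∫ w`
(`lintegral_wt_lt_top`) is an induction on the dimension: by the scaled beta integral, integrating
out one coordinate yields a constant times a weight of the same form in one dimension less.
-/


open MeasureTheory

noncomputable section

def simplex (N : ℕ) : Set (Fin N → ℝ) :=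
  {x | (∀ i, 0 ≤ x i ∧ x i ≤ 1) ∧ ∑ i, x i ≤ 1}

def dirichletDensity (N : ℕ) (α : Fin (N + 1) → ℝ) (x : Fin N → ℝ) : ℝ :=
  (Real.Gamma (∑ k, α k) / ∏ k, Real.Gamma (α k)) *
    Real.rpow (1 - ∑ i, x i) (α (Fin.last N) - 1) *
    ∏ i, Real.rpow (x i) (α (Fin.castSucc i) - 1)

def dirichlet (N : ℕ) (α : Fin (N + 1) → ℝ) : Measure (Fin N → ℝ) :=
  (volume.restrict (simplex N)).withDensity fun x => ENNReal.ofReal (dirichletDensity N α x)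

/-- Partial derivative ∂_n f at x. -/
def pd (N : ℕ) (n : Fin N) (f : (Fin N → ℝ) → ℝ) (x : Fin N → ℝ) : ℝ :=
  fderiv ℝ f x (Pi.single n 1)

/-- The generator L_α^(N) = Σ_n [x_n(1−|x|₁)∂_n² + (α_n(1−|x|₁) − α_{N+1} x_n)∂_n]. -/
def Lop (N : ℕ) (α : Fin (N + 1) → ℝ) (f : (Fin N → ℝ) → ℝ) (x : Fin N → ℝ) : ℝ :=
  ∑ n, (x n * (1 - ∑ i, x i) * pd N n (fun y => pd N n f y) x
    + (α (Fin.castSucc n) * (1 - ∑ i, x i) - α (Fin.last N) * x n) * pd N n f x)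

/-! ### The weight and slices of the simplex -/

/-- The unnormalized Dirichlet density `(1 - |x|₁)^(q-1) ∏ xᵢ^(pᵢ-1)`, with the exponent `q` of the
last barycentric coordinate separated from the others. -/
def wt {M : ℕ} (p : Fin M → ℝ) (q : ℝ) (x : Fin M → ℝ) : ℝ :=
  (1 - ∑ i, x i) ^ (q - 1) * ∏ i, (x i) ^ (p i - 1)

lemma measurable_wt {M : ℕ} (p : Fin M → ℝ) (q : ℝ) : Measurable (wt p q) := by
  unfold wt
  fun_prop

lemma wt_nonneg {M : ℕ} (p : Fin M → ℝ) (q : ℝ) {x : Fin M → ℝ} (hx : x ∈ simplex M) :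
    0 ≤ wt p q x :=
  mul_nonneg (Real.rpow_nonneg (by linarith [hx.2]) _)
    (Finset.prod_nonneg fun i _ => Real.rpow_nonneg (hx.1 i).1 _)

lemma isCompact_simplex (M : ℕ) : IsCompact (simplex M) := by
  refine (isCompact_Icc (a := (0 : Fin M → ℝ)) (b := 1)).of_isClosed_subset ?_ ?_
  · have h1 : IsClosed {x : Fin M → ℝ | ∀ i, 0 ≤ x i ∧ x i ≤ 1} := by
      simp only [Set.ofPred_forall]
      exact isClosed_iInter fun i =>
        (isClosed_le continuous_const (continuous_apply i)).inter
          (isClosed_le (continuous_apply i) continuous_const)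
    exact h1.inter (isClosed_le
      (f := fun x : Fin M → ℝ => ∑ i, x i) (by fun_prop) continuous_const)
  · intro x hx
    exact ⟨fun i => (hx.1 i).1, fun i => (hx.1 i).2⟩

lemma measurableSet_simplex (M : ℕ) : MeasurableSet (simplex M) :=
  (isCompact_simplex M).measurableSet

/-- The line in direction `n` over a point `y` of the opposite face meets the simplex in the
segment `[0, 1 - |y|₁]`. -/
lemma insertNth_mem_simplex {M : ℕ} (n : Fin (M + 1)) (t : ℝ) (y : Fin M → ℝ) :
    (n.insertNth t y : Fin (M + 1) → ℝ) ∈ simplex (M + 1) ↔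
      y ∈ simplex M ∧ t ∈ Set.Icc 0 (1 - ∑ i, y i) := by
  simp only [simplex, Set.mem_ofPred_eq, Fin.forall_iff_succAbove n, Fin.sum_univ_succAbove _ n,
    Fin.insertNth_apply_same, Fin.insertNth_apply_succAbove, Set.mem_Icc]
  constructor
  · rintro ⟨⟨⟨h1, h2⟩, h3⟩, h4⟩
    exact ⟨⟨h3, by linarith⟩, h1, by linarith⟩
  · rintro ⟨⟨h1, h2⟩, h3, h4⟩
    have : 0 ≤ ∑ i, y i := Finset.sum_nonneg fun i _ => (h1 i).1
    exact ⟨⟨⟨h3, by linarith⟩, h1⟩, by linarith⟩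

lemma wt_insertNth {M : ℕ} (p : Fin (M + 1) → ℝ) (q : ℝ) (n : Fin (M + 1)) (t : ℝ)
    (y : Fin M → ℝ) :
    wt p q (n.insertNth t y : Fin (M + 1) → ℝ) =
      (∏ i, (y i) ^ (p (n.succAbove i) - 1)) *
        (t ^ (p n - 1) * ((1 - ∑ i, y i) - t) ^ (q - 1)) := by
  simp only [wt, Fin.sum_univ_succAbove _ n, Fin.prod_univ_succAbove _ n,
    Fin.insertNth_apply_same, Fin.insertNth_apply_succAbove]
  rw [show 1 - (t + ∑ i, y i) = 1 - ∑ i, y i - t by ring]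
  ring

lemma measurePreserving_insertNth {M : ℕ} (n : Fin (M + 1)) :
    MeasurePreserving (MeasurableEquiv.piFinSuccAbove (fun _ : Fin (M + 1) => ℝ) n).symm
      ((volume : Measure ℝ).prod (volume : Measure (Fin M → ℝ))) volume :=
  (volume_preserving_piFinSuccAbove (fun _ : Fin (M + 1) => ℝ) n).symm

/-! ### Integrability of the weight -/

/-- Scaled beta integral. Only an upper bound, so that `r = 0` needs no separate treatment when
the lemma is used. -/
lemma lintegral_beta_scaled_le {p q r : ℝ} (hp : 0 < p) (hq : 0 < q) (hr : 0 ≤ r) :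
    ∫⁻ t in Set.Icc 0 r, ENNReal.ofReal (t ^ (p - 1) * (r - t) ^ (q - 1)) ≤
      ENNReal.ofReal (r ^ (p + q - 1)) * ENNReal.ofReal (ProbabilityTheory.beta p q) := by
  rw [← setLIntegral_congr (Ioo_ae_eq_Icc (μ := volume) (a := (0 : ℝ)) (b := r))]
  rcases hr.eq_or_lt with rfl | hr
  · simp
  have hβ := ProbabilityTheory.beta_pos hp hq
  have h1 : ∫⁻ t in Set.Ioo (0 : ℝ) 1, ENNReal.ofReal (t ^ (p - 1) * (1 - t) ^ (q - 1)) =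
      ENNReal.ofReal (ProbabilityTheory.beta p q) := by
    have h := ProbabilityTheory.lintegral_betaPDF_eq_one hp hq
    rw [ProbabilityTheory.lintegral_betaPDF] at h
    have h2 : ∀ t : ℝ, ENNReal.ofReal (t ^ (p - 1) * (1 - t) ^ (q - 1)) =
        ENNReal.ofReal (ProbabilityTheory.beta p q) * ENNReal.ofReal
          (1 / ProbabilityTheory.beta p q * t ^ (p - 1) * (1 - t) ^ (q - 1)) := by
      intro t
      rw [← ENNReal.ofReal_mul hβ.le]
      congr 1
      field_simp
    simp_rw [h2]
    rw [lintegral_const_mul' _ _ ENNReal.ofReal_ne_top, h, mul_one]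
  have himg : (fun t => r * t) '' Set.Ioo (0 : ℝ) 1 = Set.Ioo 0 r := by
    rw [Set.image_mul_left_Ioo hr]; simp
  rw [← himg, lintegral_image_eq_lintegral_abs_deriv_mul (f' := fun _ => r) measurableSet_Ioo
    (fun x _ => by simpa using ((hasDerivAt_id x).const_mul r).hasDerivWithinAt)
    (fun a _ b _ h => mul_left_cancel₀ hr.ne' h), ← h1,
    ← lintegral_const_mul' _ _ ENNReal.ofReal_ne_top]
  refine (setLIntegral_congr_fun measurableSet_Ioo fun t ht => ?_).le
  rw [abs_of_pos hr, ← ENNReal.ofReal_mul hr.le,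
    ← ENNReal.ofReal_mul (Real.rpow_nonneg hr.le _)]
  congr 1
  rw [show r - r * t = r * (1 - t) by ring, Real.mul_rpow hr.le ht.1.le,
    Real.mul_rpow hr.le (by linarith [ht.2]),
    show p + q - 1 = 1 + (p - 1) + (q - 1) by ring, Real.rpow_add hr, Real.rpow_add hr,
    Real.rpow_one]
  ring

/-- Integrating out the first coordinate merges its exponent with that of the last barycentric
coordinate, which reduces the dimension by one. -/
lemma lintegral_wt_lt_top {M : ℕ} (p : Fin M → ℝ) (q : ℝ) (hp : ∀ i, 0 < p i) (hq : 0 < q) :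
    ∫⁻ x in simplex M, ENNReal.ofReal (wt p q x) < ⊤ := by
  induction M generalizing q with
  | zero =>
    refine setLIntegral_lt_top_of_isCompact (isCompact_simplex 0).measure_lt_top.ne
      (isCompact_simplex 0) (f := fun x => (wt p q x).toNNReal) ?_
    exact continuous_of_discreteTopology
  | succ M ih =>
    have hm : Measurable ((simplex (M + 1)).indicator fun x => ENNReal.ofReal (wt p q x)) :=
      (measurable_wt p q).ennreal_ofReal.indicator (measurableSet_simplex _)
    rw [← lintegral_indicator (measurableSet_simplex _),
      ← (measurePreserving_insertNth 0).lintegral_comp hm,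
      lintegral_prod_symm']
    swap
    · exact hm.comp (MeasurableEquiv.measurable _)
    have key : ∀ y : Fin M → ℝ,
        ∫⁻ t : ℝ, (simplex (M + 1)).indicator (fun x => ENNReal.ofReal (wt p q x))
          ((MeasurableEquiv.piFinSuccAbove (fun _ : Fin (M + 1) => ℝ) 0).symm (t, y)) ≤
        (simplex M).indicator (fun y => ENNReal.ofReal
          (wt (fun i => p (Fin.succAbove 0 i)) (p 0 + q) y)) y *
            ENNReal.ofReal (ProbabilityTheory.beta (p 0) q) := by
      intro y
      by_cases hy : y ∈ simplex M
      · have hr : 0 ≤ 1 - ∑ i, y i := by linarith [hy.2]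
        have hP : 0 ≤ ∏ i, (y i) ^ (p (Fin.succAbove 0 i) - 1) :=
          Finset.prod_nonneg fun i _ => Real.rpow_nonneg (hy.1 i).1 _
        calc _ = ∫⁻ t in Set.Icc 0 (1 - ∑ i, y i),
              ENNReal.ofReal (∏ i, (y i) ^ (p (Fin.succAbove 0 i) - 1)) *
              ENNReal.ofReal (t ^ (p 0 - 1) * ((1 - ∑ i, y i) - t) ^ (q - 1)) := by
              rw [← lintegral_indicator measurableSet_Icc]
              refine lintegral_congr fun t => ?_
              change (simplex (M + 1)).indicator _
                (Fin.insertNth 0 t y : Fin (M + 1) → ℝ) = _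
              by_cases ht : t ∈ Set.Icc 0 (1 - ∑ i, y i)
              · rw [Set.indicator_of_mem ((insertNth_mem_simplex 0 t y).2 ⟨hy, ht⟩),
                  Set.indicator_of_mem ht, wt_insertNth, ENNReal.ofReal_mul hP]
              · rw [Set.indicator_of_notMem
                    (fun h => ht ((insertNth_mem_simplex 0 t y).1 h).2),
                  Set.indicator_of_notMem ht]
          _ ≤ _ := by
              rw [lintegral_const_mul' _ _ ENNReal.ofReal_ne_top, Set.indicator_of_mem hy, wt,
                mul_comm (_ ^ _), ENNReal.ofReal_mul hP, mul_assoc]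
              gcongr
              exact lintegral_beta_scaled_le (hp 0) hq hr
      · rw [Set.indicator_of_notMem hy, zero_mul]
        refine (lintegral_eq_zero_of_ae_eq_zero (Filter.Eventually.of_forall fun t => ?_)).le
        exact Set.indicator_of_notMem (fun h => hy ((insertNth_mem_simplex 0 t y).1 h).1) _
    refine (lintegral_mono key).trans_lt ?_
    rw [lintegral_mul_const' _ _ ENNReal.ofReal_ne_top,
      lintegral_indicator (measurableSet_simplex _)]
    exact ENNReal.mul_lt_top (ih _ _ (fun i => hp _) (add_pos (hp 0) hq)) ENNReal.ofReal_lt_top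

lemma integrableOn_wt {M : ℕ} (p : Fin M → ℝ) (q : ℝ) (hp : ∀ i, 0 < p i) (hq : 0 < q) :
    IntegrableOn (wt p q) (simplex M) := by
  refine ⟨(measurable_wt p q).aestronglyMeasurable, ?_⟩
  rw [hasFiniteIntegral_iff_ofReal]
  · exact lintegral_wt_lt_top p q hp hq
  · exact (ae_restrict_iff' (measurableSet_simplex M)).2
      (Filter.Eventually.of_forall fun x hx => wt_nonneg p q hx)

/-! ### The weighted divergence theorem -/

/-- The divergence, relative to the weight `wt p q`, of the vector field `x_n (1 - |x|₁) h(x) e_n`: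
the product of the weight with this function is `∂_n (wt p q · x_n (1 - |x|₁) h)` inside the
simplex. -/
def wdiv {M : ℕ} (p : Fin M → ℝ) (q : ℝ) (n : Fin M) (h : (Fin M → ℝ) → ℝ) (x : Fin M → ℝ) : ℝ :=
  h x * (p n * (1 - ∑ i, x i) - q * x n) + x n * (1 - ∑ i, x i) * pd M n h x

lemma continuous_pd {M : ℕ} (n : Fin M) {h : (Fin M → ℝ) → ℝ} (hh : ContDiff ℝ 1 h) :
    Continuous (pd M n h) :=
  (hh.continuous_fderiv one_ne_zero).clm_apply continuous_const

lemma integrableOn_wt_mul {M : ℕ} {p : Fin M → ℝ} {q : ℝ} (hp : ∀ i, 0 < p i) (hq : 0 < q)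
    {F : (Fin M → ℝ) → ℝ} (hF : Continuous F) :
    IntegrableOn (fun x => wt p q x * F x) (simplex M) :=
  (integrableOn_wt p q hp hq).mul_continuousOn hF.continuousOn (isCompact_simplex M)

lemma continuous_wdiv {M : ℕ} (p : Fin M → ℝ) (q : ℝ) (n : Fin M) {h : (Fin M → ℝ) → ℝ}
    (hh : ContDiff ℝ 1 h) : Continuous (wdiv p q n h) := by
  have h1 := continuous_pd n hh
  have h2 := hh.continuous
  unfold wdiv
  fun_prop

/-- On a slice of the simplex parallel to `e_n` the integrand is the derivative of
`t ^ p_n (r - t) ^ q h`, which vanishes at both ends of the slice. -/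
lemma integral_slice {M : ℕ} {p : Fin (M + 1) → ℝ} {q : ℝ} (hp : ∀ i, 0 < p i) (hq : 0 < q)
    (n : Fin (M + 1)) {h : (Fin (M + 1) → ℝ) → ℝ} (hh : ContDiff ℝ 1 h) {y : Fin M → ℝ}
    (hy : y ∈ simplex M) :
    ∫ t in Set.Icc 0 (1 - ∑ i, y i), wt p q (n.insertNth t y : Fin (M + 1) → ℝ) *
      wdiv p q n h (n.insertNth t y : Fin (M + 1) → ℝ) = 0 := by
  have hr : 0 ≤ 1 - ∑ i, y i := by linarith [hy.2]
  set r := 1 - ∑ i, y i with hrdef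
  set G : ℝ → ℝ := fun t => wt p q (n.insertNth t y : Fin (M + 1) → ℝ) *
      wdiv p q n h (n.insertNth t y : Fin (M + 1) → ℝ) with hG
  change ∫ t in Set.Icc 0 r, G t = 0
  rw [integral_Icc_eq_integral_Ioc]
  -- A non-integrable slice contributes `0` by convention, so integrability may be assumed.
  by_cases hint : IntegrableOn G (Set.Ioc 0 r)
  swap
  · exact integral_undef hint
  rw [← intervalIntegral.integral_of_le hr]
  set P := ∏ i, (y i) ^ (p (n.succAbove i) - 1) with hP
  have hline : ∀ t : ℝ, HasDerivAt (fun t : ℝ => (n.insertNth t y : Fin (M + 1) → ℝ))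
      (Pi.single n 1) t := by
    intro t
    rw [hasDerivAt_pi, Fin.forall_iff_succAbove n]
    refine ⟨?_, fun i => ?_⟩
    · simpa using hasDerivAt_id' t
    · simpa [Fin.succAbove_ne] using hasDerivAt_const t (y i)
  have hlc : Continuous (fun t : ℝ => (n.insertNth t y : Fin (M + 1) → ℝ)) :=
    continuous_iff_continuousAt.2 fun t => (hline t).continuousAt
  rw [intervalIntegral.integral_eq_sub_of_hasDerivAt_of_le hr
    (f := fun t => P * (t ^ p n * (r - t) ^ q * h (n.insertNth t y : Fin (M + 1) → ℝ)))
    (f' := G)]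
  · simp [Real.zero_rpow (hp n).ne', Real.zero_rpow hq.ne']
  · have h1 : Continuous fun t : ℝ => t ^ p n :=
      continuous_id.rpow_const fun _ => Or.inr (hp n).le
    have h2 : Continuous fun t : ℝ => (r - t) ^ q :=
      (continuous_const.sub continuous_id).rpow_const fun _ => Or.inr hq.le
    exact (continuous_const.mul ((h1.mul h2).mul (hh.continuous.comp hlc))).continuousOn
  · intro t ht
    have ht0 : 0 < t := ht.1
    have ht1 : 0 < r - t := by linarith [ht.2]
    have d1 := Real.hasDerivAt_rpow_const (x := t) (p := p n) (Or.inl ht0.ne')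
    have d2 := ((hasDerivAt_id t).const_sub r).rpow_const (p := q) (Or.inl ht1.ne')
    have d3 := ((hh.differentiable one_ne_zero).differentiableAt.hasFDerivAt
      (x := (n.insertNth t y : Fin (M + 1) → ℝ))).comp_hasDerivAt t (hline t)
    have d := ((d1.mul d2).mul d3).const_mul P
    refine d.congr_deriv ?_
    have e1 : t ^ p n = t ^ (p n - 1) * t := by
      rw [Real.rpow_sub_one ht0.ne']; field_simp
    have e2 : (r - t) ^ q = (r - t) ^ (q - 1) * (r - t) := by
      rw [Real.rpow_sub_one ht1.ne']; field_simp
    have e3 : 1 - ∑ i, (n.insertNth t y : Fin (M + 1) → ℝ) i = r - t := by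
      simp only [Fin.sum_univ_succAbove _ n, Fin.insertNth_apply_same,
        Fin.insertNth_apply_succAbove, hrdef]
      ring
    simp only [hG, wt_insertNth, wdiv, e3, pd, Fin.insertNth_apply_same, ← hP, ← hrdef, id,
      Function.comp, Pi.mul_apply]
    rw [e1, e2]
    ring
  · rwa [intervalIntegrable_iff_integrableOn_Ioc_of_le hr]

/-- The divergence theorem for the vector field `x_n (1 - |x|₁) h e_n`: the boundary terms vanish
because all exponents are positive. -/
lemma integral_wdiv {M : ℕ} {p : Fin M → ℝ} {q : ℝ} (hp : ∀ i, 0 < p i) (hq : 0 < q)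
    (n : Fin M) {h : (Fin M → ℝ) → ℝ} (hh : ContDiff ℝ 1 h) :
    ∫ x in simplex M, wt p q x * wdiv p q n h x = 0 := by
  obtain _ | M := M
  · exact n.elim0
  have hI := integrableOn_wt_mul hp hq (continuous_wdiv p q n hh)
  rw [← integrable_indicator_iff (measurableSet_simplex _)] at hI
  have hmp := measurePreserving_insertNth n
  rw [← integral_indicator (measurableSet_simplex _), ← hmp.integral_comp', integral_prod_symm]
  swap
  · exact (hmp.integrable_comp_emb (MeasurableEquiv.measurableEmbedding _)).2 hI
  refine integral_eq_zero_of_ae (Filter.Eventually.of_forall fun y => ?_)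
  change ∫ t : ℝ, (simplex (M + 1)).indicator (fun x => wt p q x * wdiv p q n h x)
    (n.insertNth t y : Fin (M + 1) → ℝ) = 0
  by_cases hy : y ∈ simplex M
  · rw [← integral_slice hp hq n hh hy, ← integral_indicator measurableSet_Icc]
    refine integral_congr_ae (Filter.Eventually.of_forall fun t => ?_)
    by_cases ht : t ∈ Set.Icc 0 (1 - ∑ i, y i)
    · simp only [Set.indicator_of_mem ((insertNth_mem_simplex n t y).2 ⟨hy, ht⟩),
        Set.indicator_of_mem ht]
    · simp only [Set.indicator_of_notMem ht, Set.indicator_of_notMem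
        (fun h => ht ((insertNth_mem_simplex n t y).1 h).2)]
  · refine integral_eq_zero_of_ae (Filter.Eventually.of_forall fun t => ?_)
    exact Set.indicator_of_notMem (fun h => hy ((insertNth_mem_simplex n t y).1 h).1) _

/-! ### The Dirichlet form -/

lemma integral_dirichlet {N : ℕ} {α : Fin (N + 1) → ℝ} (hα : ∀ k, 0 < α k)
    (F : (Fin N → ℝ) → ℝ) :
    ∫ x, F x ∂(dirichlet N α) =
      (Real.Gamma (∑ k, α k) / ∏ k, Real.Gamma (α k)) *
        ∫ x in simplex N, wt (fun i => α (Fin.castSucc i)) (α (Fin.last N)) x * F x := by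
  set C := Real.Gamma (∑ k, α k) / ∏ k, Real.Gamma (α k) with hC
  have hC0 : 0 ≤ C := div_nonneg
    (Real.Gamma_nonneg_of_nonneg (Finset.sum_nonneg fun k _ => (hα k).le))
    (Finset.prod_nonneg fun k _ => Real.Gamma_nonneg_of_nonneg (hα k).le)
  have hd : dirichletDensity N α =
      fun x => C * wt (fun i => α (Fin.castSucc i)) (α (Fin.last N)) x := by
    funext x
    simp only [dirichletDensity, wt, Real.rpow_eq_pow, ← hC]
    ring
  rw [dirichlet, hd, integral_withDensity_eq_integral_toReal_smul
    ((measurable_wt _ _).const_mul C).ennreal_ofReal (by simp), ← integral_const_mul]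
  refine setIntegral_congr_fun (measurableSet_simplex N) fun x hx => ?_
  simp only [smul_eq_mul]
  rw [ENNReal.toReal_ofReal (mul_nonneg hC0 (wt_nonneg _ _ hx))]
  ring

/-- Integration by parts formula for L_α^(N) and the Dirichlet form. -/
theorem Lop_integration_by_parts (N : ℕ) (hN : 1 ≤ N) (α : Fin (N + 1) → ℝ)
    (hα : ∀ k, 0 < α k) (f g : (Fin N → ℝ) → ℝ)
    (hf : ContDiff ℝ 2 f) (hg : ContDiff ℝ 2 g) :
    -∫ x, f x * Lop N α g x ∂(dirichlet N α)
      = ∫ x, (1 - ∑ i, x i) * ∑ n, x n * (pd N n f x * pd N n g x) ∂(dirichlet N α) := by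
  have hp : ∀ i : Fin N, 0 < α (Fin.castSucc i) := fun i => hα _
  have hq : 0 < α (Fin.last N) := hα _
  have hf1 : ContDiff ℝ 1 f := hf.of_le (by norm_num)
  have hg1 : ContDiff ℝ 1 g := hg.of_le (by norm_num)
  have hpg : ∀ n, ContDiff ℝ 1 (pd N n g) := fun n =>
    (hg.fderiv_right (m := 1) (by norm_num)).clm_apply contDiff_const
  have hh : ∀ n, ContDiff ℝ 1 (fun x => f x * pd N n g x) := fun n => hf1.mul (hpg n)
  have hpdh : ∀ n x, pd N n (fun x => f x * pd N n g x) x =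
      f x * pd N n (fun y => pd N n g y) x + pd N n g x * pd N n f x := by
    intro n x
    have := fderiv_fun_mul (hf1.differentiable one_ne_zero x) ((hpg n).differentiable one_ne_zero x)
    rw [pd, this]
    rfl
  have hcf := hf.continuous
  have hcpf : ∀ n, Continuous (pd N n f) := fun n => continuous_pd n hf1
  have hcpg : ∀ n, Continuous (pd N n g) := fun n => continuous_pd n hg1
  have hcppg : ∀ n, Continuous (pd N n (fun y => pd N n g y)) := fun n => continuous_pd n (hpg n)
  have hL : Continuous (fun x => f x * Lop N α g x) := by
    unfold Lop
    fun_prop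
  have hΓ : Continuous (fun x : Fin N → ℝ =>
      (1 - ∑ i, x i) * ∑ n, x n * (pd N n f x * pd N n g x)) := by
    fun_prop
  rw [integral_dirichlet hα, integral_dirichlet hα, ← mul_neg]
  congr 1
  rw [neg_eq_iff_add_eq_zero,
    ← integral_add (integrableOn_wt_mul hp hq hL) (integrableOn_wt_mul hp hq hΓ)]
  -- Both integrands together form the divergence of the vector field with components
  -- `x_n (1 - |x|₁) f ∂_n g`.
  have hsum : ∀ x : Fin N → ℝ,
      wt (fun i => α (Fin.castSucc i)) (α (Fin.last N)) x * (f x * Lop N α g x) +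
        wt (fun i => α (Fin.castSucc i)) (α (Fin.last N)) x *
          ((1 - ∑ i, x i) * ∑ n, x n * (pd N n f x * pd N n g x)) =
      ∑ n, wt (fun i => α (Fin.castSucc i)) (α (Fin.last N)) x *
        wdiv (fun i => α (Fin.castSucc i)) (α (Fin.last N)) n (fun x => f x * pd N n g x) x := by
    intro x
    rw [← mul_add, ← Finset.mul_sum, Lop, Finset.mul_sum, Finset.mul_sum,
      ← Finset.sum_add_distrib]
    congr 1
    refine Finset.sum_congr rfl fun n _ => ?_
    rw [wdiv, hpdh]
    ring
  simp_rw [hsum]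
  rw [integral_finsetSum _ fun n _ => integrableOn_wt_mul hp hq (continuous_wdiv _ _ n (hh n))]
  exact Finset.sum_eq_zero fun n _ => integral_wdiv hp hq n (hh n)

end
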